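/- arXiv:2310.02993 — 3 statements merged into one kernel-verified Lean document; each statement's English description precedes it below -/
import Mathlib

section
/- Let G = (V, E) be a finite directed graph, a : V → ℝ^D, μ₁, μ₂ ∈ ℝ^D, and λ_f, λ_b ≥ 0, and let H = (W, A) be the weighted directed graph with W = V ∪ {s, t}, edges (s, v) of weight ‖a(v) − μ₂‖₂² and (v, t) of weight ‖a(v) − μ₁‖₂² for each v ∈ V, and for each (v, w) ∈ E an edge (v, w) of weight λ_f and an edge (w, v) of weight λ_b. Then the minimum over all s-t cuts (C₁, C₂) of H of the total weight of edges from C₁ to C₂ equals the minimum over all ordered 2-partitions (S₁, S₂) of V of q((S₁, S₂), μ₁, μ₂ | λ_f, λ_b); in particular, if (C₁, C₂) is a minimum s-t cut then (C₁ ∩ V, C₂ ∩ V) minimizes q among all ordered 2-partitions of V. -/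
/-!
A cut `(C₁, C₂)` of `H` is determined by its trace `(C₁ ∩ V, C₂ ∩ V)` on `V`, since `s ∈ C₁` and
`t ∈ C₂`; conversely `(S₁ ∪ {s}, S₂ ∪ {t})` is a cut for every ordered 2-partition `(S₁, S₂)`.
This bijection preserves the objective (`cut_weight_disjSum`): the edges crossing the cut are
`(v, t)` for `v ∈ S₁`, `(s, v)` for `v ∈ S₂`, and the edges between `S₁` and `S₂`, which pay `λ_f`
for each edge of `E` from `S₁` to `S₂` and `λ_b` for each one from `S₂` to `S₁`. Hence both problems
have the same set of values and the same minimizers.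
-/

open Finset

/-- The edge-weight function of the auxiliary graph `H` on `W = V ⊕ {s, t}`
(`s = Sum.inr false`, `t = Sum.inr true`). -/
noncomputable def cutW {V : Type*} [DecidableEq V] {D : ℕ}
    (E : Finset (V × V)) (a : V → EuclideanSpace ℝ (Fin D))
    (μ1 μ2 : EuclideanSpace ℝ (Fin D)) (lf lb : ℝ) :
    (V ⊕ Bool) → (V ⊕ Bool) → ℝ
  | Sum.inr false, Sum.inl v => ‖a v - μ2‖ ^ 2
  | Sum.inl v, Sum.inr true => ‖a v - μ1‖ ^ 2
  | Sum.inl v, Sum.inl w =>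
      (if (v, w) ∈ E then lf else 0) + (if (w, v) ∈ E then lb else 0)
  | _, _ => 0

/-- The cost `q((S₁, S₂), μ₁, μ₂ | λ_f, λ_b)` of an ordered 2-partition `(S₁, S₂)`. -/
noncomputable def qTwo {V : Type*} [DecidableEq V] {D : ℕ}
    (E : Finset (V × V)) (a : V → EuclideanSpace ℝ (Fin D))
    (μ1 μ2 : EuclideanSpace ℝ (Fin D)) (lf lb : ℝ) (S1 S2 : Finset V) : ℝ :=
  (∑ v ∈ S1, ‖a v - μ1‖ ^ 2) + (∑ v ∈ S2, ‖a v - μ2‖ ^ 2)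
    + lf * ((E.filter (fun e => e.1 ∈ S1 ∧ e.2 ∈ S2)).card : ℝ)
    + lb * ((E.filter (fun e => e.1 ∈ S2 ∧ e.2 ∈ S1)).card : ℝ)

/-- The edges of `E` from `A` to `B`, counted as an iterated sum of indicators. -/
lemma sum_ite_mem_edges {V : Type*} [DecidableEq V] (E : Finset (V × V)) (A B : Finset V) (c : ℝ) :
    ∑ v ∈ A, ∑ w ∈ B, (if (v, w) ∈ E then c else 0)
      = c * ((E.filter (fun e => e.1 ∈ A ∧ e.2 ∈ B)).card : ℝ) := by
  have h : E.filter (fun e => e.1 ∈ A ∧ e.2 ∈ B) = (A ×ˢ B).filter (fun e => e ∈ E) := by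
    ext e
    simp only [Finset.mem_filter, Finset.mem_product]
    tauto
  rw [h, ← Finset.sum_product' A B (fun v w => if (v, w) ∈ E then c else 0), ← Finset.sum_filter,
    Finset.sum_const, nsmul_eq_mul, mul_comm]

/-- The cut `(S₁ ∪ {s}, S₂ ∪ {t})` has weight `q(S₁, S₂)`. -/
lemma cut_weight_disjSum {V : Type*} [DecidableEq V] {D : ℕ}
    (E : Finset (V × V)) (a : V → EuclideanSpace ℝ (Fin D))
    (μ1 μ2 : EuclideanSpace ℝ (Fin D)) (lf lb : ℝ) (S1 S2 : Finset V) :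
    ∑ u ∈ S1.disjSum {false}, ∑ w ∈ S2.disjSum {true}, cutW E a μ1 μ2 lf lb u w
      = qTwo E a μ1 μ2 lf lb S1 S2 := by
  have hb : ∑ v ∈ S1, ∑ w ∈ S2, (if (w, v) ∈ E then lb else 0)
      = lb * ((E.filter (fun e => e.1 ∈ S2 ∧ e.2 ∈ S1)).card : ℝ) := by
    rw [Finset.sum_comm, sum_ite_mem_edges]
  simp only [Finset.sum_disjSum, Finset.sum_singleton, cutW, Finset.sum_add_distrib, qTwo,
    sum_ite_mem_edges, hb]
  ring

/-- An `s`-`t` cut is its trace on `V` together with `s` on the left and `t` on the right. -/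
lemma cut_eq_disjSum {V : Type*} [Fintype V] [DecidableEq V] {C1 C2 : Finset (V ⊕ Bool)}
    (hd : Disjoint C1 C2) (hs : Sum.inr false ∈ C1) (ht : Sum.inr true ∈ C2) :
    C1 = (Finset.univ.filter (fun v => Sum.inl v ∈ C1)).disjSum {false} ∧
    C2 = (Finset.univ.filter (fun v => Sum.inl v ∈ C2)).disjSum {true} := by
  have hs' := Finset.disjoint_left.1 hd hs
  have ht' := Finset.disjoint_right.1 hd ht
  constructor <;> ext (v | _ | _) <;> simp [*]

lemma disjSum_isCut {V : Type*} [Fintype V] [DecidableEq V] {S1 S2 : Finset V}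
    (hd : Disjoint S1 S2) (hu : S1 ∪ S2 = Finset.univ) :
    Disjoint (S1.disjSum {false}) (S2.disjSum {true}) ∧
    S1.disjSum {false} ∪ S2.disjSum {true} = Finset.univ := by
  constructor
  · rw [Finset.disjoint_left] at hd ⊢
    rintro (v | _ | _) <;> simp
    exact @hd v
  · ext (v | _ | _) <;> simp
    simpa using Finset.ext_iff.1 hu v

lemma cut_trace_partition {V : Type*} [Fintype V] [DecidableEq V] {C1 C2 : Finset (V ⊕ Bool)}
    (hd : Disjoint C1 C2) (hu : C1 ∪ C2 = Finset.univ) :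
    Disjoint (Finset.univ.filter (fun v : V => Sum.inl v ∈ C1))
      (Finset.univ.filter (fun v : V => Sum.inl v ∈ C2)) ∧
    Finset.univ.filter (fun v : V => Sum.inl v ∈ C1) ∪
      Finset.univ.filter (fun v : V => Sum.inl v ∈ C2) = Finset.univ := by
  constructor
  · rw [Finset.disjoint_left] at hd ⊢
    intro v
    simpa using @hd (Sum.inl v)
  · ext v
    simpa using Finset.ext_iff.1 hu (Sum.inl v)

lemma cut_weight_eq_qTwo {V : Type*} [Fintype V] [DecidableEq V] {D : ℕ}
    (E : Finset (V × V)) (a : V → EuclideanSpace ℝ (Fin D))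
    (μ1 μ2 : EuclideanSpace ℝ (Fin D)) (lf lb : ℝ) {C1 C2 : Finset (V ⊕ Bool)}
    (hd : Disjoint C1 C2) (hs : Sum.inr false ∈ C1) (ht : Sum.inr true ∈ C2) :
    ∑ u ∈ C1, ∑ w ∈ C2, cutW E a μ1 μ2 lf lb u w
      = qTwo E a μ1 μ2 lf lb (Finset.univ.filter (fun v => Sum.inl v ∈ C1))
          (Finset.univ.filter (fun v => Sum.inl v ∈ C2)) := by
  obtain ⟨h1, h2⟩ := cut_eq_disjSum hd hs ht
  rw [← cut_weight_disjSum, ← h1, ← h2]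

/-- The minimum weight of an `s`-`t` cut of the auxiliary graph `H` equals the minimum of
`q((S₁, S₂), μ₁, μ₂ | λ_f, λ_b)` over all ordered 2-partitions of `V`; in particular, if
`(C₁, C₂)` is a minimum `s`-`t` cut then `(C₁ ∩ V, C₂ ∩ V)` minimizes `q` among all
ordered 2-partitions of `V`. -/
theorem min_cut_eq_min_q {V : Type*} [Fintype V] [DecidableEq V] {D : ℕ}
    (E : Finset (V × V)) (a : V → EuclideanSpace ℝ (Fin D))
    (μ1 μ2 : EuclideanSpace ℝ (Fin D)) (lf lb : ℝ) (hlf : 0 ≤ lf) (hlb : 0 ≤ lb) :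
    (sInf {x : ℝ | ∃ C1 C2 : Finset (V ⊕ Bool),
        Disjoint C1 C2 ∧ C1 ∪ C2 = Finset.univ ∧
        Sum.inr false ∈ C1 ∧ Sum.inr true ∈ C2 ∧
        x = ∑ u ∈ C1, ∑ w ∈ C2, cutW E a μ1 μ2 lf lb u w}
      = sInf {x : ℝ | ∃ S1 S2 : Finset V,
        Disjoint S1 S2 ∧ S1 ∪ S2 = Finset.univ ∧
        x = qTwo E a μ1 μ2 lf lb S1 S2}) ∧
    (∀ C1 C2 : Finset (V ⊕ Bool),
      Disjoint C1 C2 → C1 ∪ C2 = Finset.univ →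
      Sum.inr false ∈ C1 → Sum.inr true ∈ C2 →
      (∀ C1' C2' : Finset (V ⊕ Bool),
        Disjoint C1' C2' → C1' ∪ C2' = Finset.univ →
        Sum.inr false ∈ C1' → Sum.inr true ∈ C2' →
        ∑ u ∈ C1, ∑ w ∈ C2, cutW E a μ1 μ2 lf lb u w
          ≤ ∑ u ∈ C1', ∑ w ∈ C2', cutW E a μ1 μ2 lf lb u w) →
      ∀ S1 S2 : Finset V, Disjoint S1 S2 → S1 ∪ S2 = Finset.univ →
        qTwo E a μ1 μ2 lf lb
            (Finset.univ.filter (fun v => Sum.inl v ∈ C1))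
            (Finset.univ.filter (fun v => Sum.inl v ∈ C2))
          ≤ qTwo E a μ1 μ2 lf lb S1 S2) := by
  constructor
  · congr 1
    ext x
    constructor
    · rintro ⟨C1, C2, hd, hu, hs, ht, rfl⟩
      obtain ⟨hd', hu'⟩ := cut_trace_partition hd hu
      exact ⟨_, _, hd', hu', cut_weight_eq_qTwo E a μ1 μ2 lf lb hd hs ht⟩
    · rintro ⟨S1, S2, hd, hu, rfl⟩
      obtain ⟨hd', hu'⟩ := disjSum_isCut hd hu
      exact ⟨_, _, hd', hu', by simp, by simp,
        (cut_weight_disjSum E a μ1 μ2 lf lb S1 S2).symm⟩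
  · intro C1 C2 hd _ hs ht hmin S1 S2 hd' hu'
    obtain ⟨hd'', hu''⟩ := disjSum_isCut hd' hu'
    rw [← cut_weight_eq_qTwo E a μ1 μ2 lf lb hd hs ht, ← cut_weight_disjSum]
    exact hmin _ _ hd'' hu'' (by simp) (by simp)
end

section
/- Let G = (V, E) be a finite arborescence (a rooted directed tree in which all edges point away from the root), a : V → ℝ^D a feature map, M = (μ₁, …, μ_k) fixed centroids, and λ_f, λ_b ≥ 0. Let v ∈ V, let G_v be the subtree consisting of v and all of its descendants, and let 𝒮 = (S₁, …, S_k) be an ordered k-partition of the vertices of G_v with v ∈ S_i. For each child w of v, let 𝒮_w denote the restriction of 𝒮 to the vertices of G_w, and define g(w) = 0 if w ∈ S_i, g(w) = λ_f if w ∈ S_j with j > i, and g(w) = λ_b if w ∈ S_j with j < i. Then q(𝒮, M | λ_f, λ_b) = ‖a(v) − μ_i‖₂² + ∑_{w : (v, w) ∈ E} (g(w) + q(𝒮_w, M | λ_f, λ_b)). -/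
/-!
The cost of a partition is additive: it is a sum of node weights over the vertices and of edge
weights over the edges (`qCost_eq`). In an arborescence every vertex `x ≠ v` of `G_v` has exactly
one incoming edge inside `G_v`, namely `(p x, x)`, while `v` has none, so the edge sum over `G_v`
is a sum over the vertices of `G_v` other than `v` (`sum_subtreeEdges`). Since `G_v` minus `v` is
the disjoint union of the subtrees `G_w` at the children `w` of `v`
(`erase_subtree`, `disjoint_subtree`), the whole cost splits over the children, the edge
`(v, w)` contributing `g(w)` (`edgeWeight_eq`). The depth function is what rules out cycles and
makes the subtrees of distinct children disjoint (`depth_iterate`).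
-/

open Finset

/-- The cost `q(𝒮, M | λ_f, λ_b)` of an ordered `k`-partition `S` with centroids `μ`,
with respect to the directed edge set `E` and feature map `a`. -/
noncomputable def qCost {V : Type*} [DecidableEq V] {D k : ℕ}
    (E : Finset (V × V)) (a : V → EuclideanSpace ℝ (Fin D))
    (S : Fin k → Finset V) (μ : Fin k → EuclideanSpace ℝ (Fin D))
    (lf lb : ℝ) : ℝ :=
  (∑ i : Fin k, ∑ v ∈ S i, ‖a v - μ i‖ ^ 2) +
  ∑ i : Fin k, ∑ j : Fin k,
    if i < j then
      lf * ((E.filter (fun e => e.1 ∈ S i ∧ e.2 ∈ S j)).card : ℝ) +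
      lb * ((E.filter (fun e => e.1 ∈ S j ∧ e.2 ∈ S i)).card : ℝ)
    else 0

/-- The edges of the arborescence with root `r` and parent map `p`:
an edge `(p w, w)` for every non-root vertex `w`. -/
def treeEdges {V : Type*} [Fintype V] [DecidableEq V] (r : V) (p : V → V) :
    Finset (V × V) :=
  (Finset.univ.filter (fun w => w ≠ r)).image (fun w => (p w, w))

open scoped Classical in
/-- The vertices of the subtree `G_v`: `v` together with all of its descendants. -/
noncomputable def subtree {V : Type*} [Fintype V] (p : V → V) (v : V) : Finset V :=
  Finset.univ.filter (fun w => ∃ n : ℕ, p^[n] w = v)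

/-- The edges of the subtree `G_v`. -/
noncomputable def subtreeEdges {V : Type*} [Fintype V] [DecidableEq V]
    (r : V) (p : V → V) (v : V) : Finset (V × V) :=
  (treeEdges r p).filter (fun e => e.1 ∈ subtree p v ∧ e.2 ∈ subtree p v)

/-- The children of a vertex `v` in the arborescence. -/
def children {V : Type*} [Fintype V] [DecidableEq V] (r : V) (p : V → V) (v : V) :
    Finset V :=
  Finset.univ.filter (fun w => w ≠ r ∧ p w = v)

/-- The cost contributed by `x` as a vertex: its squared distance to the centroid of its part
(summed over all parts containing `x`). -/
noncomputable def nodeWeight {V : Type*} [DecidableEq V] {D k : ℕ}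
    (a : V → EuclideanSpace ℝ (Fin D)) (S : Fin k → Finset V)
    (μ : Fin k → EuclideanSpace ℝ (Fin D)) (x : V) : ℝ :=
  ∑ i : Fin k, if x ∈ S i then ‖a x - μ i‖ ^ 2 else 0

/-- The cost contributed by a single edge `(x, y)`: `lf` if it runs from a part to a later one,
`lb` if it runs from a part to an earlier one. -/
noncomputable def edgeWeight {V : Type*} [DecidableEq V] {k : ℕ}
    (S : Fin k → Finset V) (lf lb : ℝ) (x y : V) : ℝ :=
  ∑ i : Fin k, ∑ j : Fin k,
    if i < j then
      lf * (if x ∈ S i ∧ y ∈ S j then 1 else 0) + lb * (if x ∈ S j ∧ y ∈ S i then 1 else 0)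
    else 0

/-- The cost of a family of subsets of `T`, disjoint or not, as a sum over vertices and edges. -/
lemma qCost_eq {V : Type*} [DecidableEq V] {D k : ℕ}
    (E : Finset (V × V)) (a : V → EuclideanSpace ℝ (Fin D))
    (S : Fin k → Finset V) (μ : Fin k → EuclideanSpace ℝ (Fin D))
    (lf lb : ℝ) (T : Finset V) (hT : ∀ i, S i ⊆ T) :
    qCost E a S μ lf lb =
      ∑ x ∈ T, nodeWeight a S μ x + ∑ e ∈ E, edgeWeight S lf lb e.1 e.2 := by
  unfold qCost nodeWeight edgeWeight
  congr 1
  · rw [Finset.sum_comm]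
    refine Finset.sum_congr rfl fun i _ => ?_
    rw [← Finset.sum_filter, Finset.filter_mem_eq_inter, Finset.inter_eq_right.2 (hT i)]
  · symm
    rw [Finset.sum_comm]
    refine Finset.sum_congr rfl fun i _ => ?_
    rw [Finset.sum_comm]
    refine Finset.sum_congr rfl fun j _ => ?_
    split_ifs with h
    · rw [Finset.sum_add_distrib, ← Finset.mul_sum, ← Finset.mul_sum, Finset.sum_boole,
        Finset.sum_boole]
    · simp

lemma edgeWeight_eq {V : Type*} [DecidableEq V] {k : ℕ}
    (S : Fin k → Finset V) (lf lb : ℝ) (x y : V) (i m : Fin k)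
    (hx : ∀ t, x ∈ S t ↔ t = i) (hy : ∀ t, y ∈ S t ↔ t = m) :
    edgeWeight S lf lb x y = if i < m then lf else if m < i then lb else 0 := by
  unfold edgeWeight
  have key : ∀ s t : Fin k, (if s < t then
      lf * (if x ∈ S s ∧ y ∈ S t then 1 else 0) + lb * (if x ∈ S t ∧ y ∈ S s then 1 else 0)
      else 0) = (if s = i then if t = m then (if i < m then lf else 0) else 0 else 0)
        + (if s = m then if t = i then (if m < i then lb else 0) else 0 else 0) := by
    intro s t
    simp only [hx, hy]
    by_cases h1 : s = i <;> by_cases h2 : t = m <;> by_cases h3 : s = m <;>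
      by_cases h4 : t = i <;> simp_all
  simp only [key, Finset.sum_add_distrib]
  simp only [Finset.sum_ite_irrel, Finset.sum_ite_eq', Finset.mem_univ, if_true,
    Finset.sum_const_zero]
  split_ifs with h1 h2 <;> simp
  exact absurd h1 (not_lt.2 h2.le)

section Tree

variable {V : Type*} (r : V) (p : V → V) (depth : V → ℕ)

/-- Each step towards the root lowers the depth by one, as long as the root is not reached. -/
lemma depth_iterate (hpr : p r = r) (hdepth : ∀ w, w ≠ r → depth w = depth (p w) + 1)
    (n : ℕ) (x : V) (h : p^[n] x ≠ r) : depth (p^[n] x) + n = depth x := by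
  induction n generalizing x with
  | zero => rfl
  | succ n ih =>
    have hx : x ≠ r := by
      rintro rfl
      exact h (Function.iterate_fixed hpr _)
    rw [Function.iterate_succ_apply] at h ⊢
    have := ih (p x) h
    have := hdepth x hx
    omega

variable [Fintype V]

lemma mem_subtree {v x : V} : x ∈ subtree p v ↔ ∃ n : ℕ, p^[n] x = v := by
  simp [subtree]

lemma self_mem_subtree (v : V) : v ∈ subtree p v := (mem_subtree p).2 ⟨0, rfl⟩

lemma parent_mem_subtree (hpr : p r = r) {v x : V} (hx : x ∈ subtree p v) (hne : x ≠ v) :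
    x ≠ r ∧ p x ∈ subtree p v := by
  obtain ⟨n, hn⟩ := (mem_subtree p).1 hx
  refine ⟨?_, ?_⟩
  · rintro rfl
    exact hne (by rw [← hn, Function.iterate_fixed hpr])
  · cases n with
    | zero => exact absurd hn hne
    | succ n => exact (mem_subtree p).2 ⟨n, hn⟩

variable [DecidableEq V]

/-- The edges of `G_v` are exactly the edges `(p x, x)` with `x ≠ v` a vertex of `G_v`. -/
lemma sum_subtreeEdges (hpr : p r = r) (hdepth : ∀ w, w ≠ r → depth w = depth (p w) + 1)
    (v : V) (f : V × V → ℝ) :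
    ∑ e ∈ subtreeEdges r p v, f e = ∑ x ∈ (subtree p v).erase v, f (p x, x) := by
  have : subtreeEdges r p v = ((subtree p v).erase v).image (fun x => (p x, x)) := by
    ext ⟨y, x⟩
    simp only [subtreeEdges, treeEdges, Finset.mem_filter, Finset.mem_image, Finset.mem_univ,
      true_and, Finset.mem_erase, Prod.mk.injEq]
    constructor
    · rintro ⟨⟨x', hr, rfl, rfl⟩, hp, hx⟩
      refine ⟨x', ⟨?_, hx⟩, rfl, rfl⟩
      -- an edge into `v` inside `G_v` would close a directed cycle
      rintro rfl
      obtain ⟨n, hn⟩ := (mem_subtree p).1 hp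
      have hn' : p^[n + 1] x' = x' := hn
      have := depth_iterate r p depth hpr hdepth (n + 1) x' (by rwa [hn'])
      rw [hn'] at this
      omega
    · rintro ⟨x', ⟨hne, hx⟩, rfl, rfl⟩
      obtain ⟨h1, h2⟩ := parent_mem_subtree r p hpr hx hne
      exact ⟨⟨x', h1, rfl, rfl⟩, h2, hx⟩
  rw [this, Finset.sum_image]
  intro x _ y _ h
  exact (Prod.mk.inj h).2

lemma erase_subtree (hpr : p r = r) (hdepth : ∀ w, w ≠ r → depth w = depth (p w) + 1) (v : V) :
    (subtree p v).erase v = (children r p v).biUnion (subtree p) := by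
  ext x
  simp only [Finset.mem_erase, Finset.mem_biUnion, children, Finset.mem_filter, Finset.mem_univ,
    true_and]
  constructor
  · rintro ⟨hne, hx⟩
    obtain ⟨n, hn⟩ := (mem_subtree p).1 hx
    -- the child is the last vertex other than `v` on the path from `x` up to `v`
    induction n generalizing x with
    | zero => exact absurd hn hne
    | succ n ih =>
      obtain ⟨h1, h2⟩ := parent_mem_subtree r p hpr hx hne
      by_cases h : p x = v
      · exact ⟨x, ⟨h1, h⟩, self_mem_subtree p x⟩
      · obtain ⟨w, hw, hxw⟩ := ih (p x) h h2 hn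
        obtain ⟨m, hm⟩ := (mem_subtree p).1 hxw
        exact ⟨w, hw, (mem_subtree p).2 ⟨m + 1, hm⟩⟩
  · rintro ⟨w, ⟨hwr, hwv⟩, hx⟩
    obtain ⟨n, hn⟩ := (mem_subtree p).1 hx
    refine ⟨?_, (mem_subtree p).2 ⟨n + 1, by rw [Function.iterate_succ_apply', hn, hwv]⟩⟩
    rintro rfl
    have := depth_iterate r p depth hpr hdepth n x (by rwa [hn])
    have h2 := hdepth w hwr
    rw [hwv] at h2
    rw [hn] at this
    omega

lemma disjoint_subtree (hpr : p r = r) (hdepth : ∀ w, w ≠ r → depth w = depth (p w) + 1)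
    (v : V) : (children r p v : Set V).PairwiseDisjoint (subtree p) := by
  intro w hw w' hw' hne
  simp only [children, Finset.coe_filter, Finset.mem_univ, true_and, Set.mem_ofPred_eq] at hw hw'
  refine Finset.disjoint_left.2 fun x hx hxu => hne ?_
  obtain ⟨n, hn⟩ := (mem_subtree p).1 hx
  obtain ⟨m, hm⟩ := (mem_subtree p).1 hxu
  -- `w` and `w'` have the same depth, hence the same distance from their descendant `x`
  have h1 := depth_iterate r p depth hpr hdepth n x (by rw [hn]; exact hw.1)
  have h2 := depth_iterate r p depth hpr hdepth m x (by rw [hm]; exact hw'.1)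
  have h3 := hdepth w hw.1
  have h4 := hdepth w' hw'.1
  rw [hn] at h1
  rw [hm] at h2
  rw [hw.2] at h3
  rw [hw'.2] at h4
  have : n = m := by omega
  rw [← hn, ← hm, this]

/-- The cost of the restriction of `S` to `G_w`, with weights computed from `S` itself. -/
lemma qCost_subtree {D k : ℕ} (hpr : p r = r)
    (hdepth : ∀ w, w ≠ r → depth w = depth (p w) + 1)
    (a : V → EuclideanSpace ℝ (Fin D)) (μ : Fin k → EuclideanSpace ℝ (Fin D))
    (lf lb : ℝ) (S : Fin k → Finset V) (w : V) :
    qCost (subtreeEdges r p w) a (fun t => S t ∩ subtree p w) μ lf lb =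
      ∑ x ∈ subtree p w, nodeWeight a S μ x +
        ∑ x ∈ (subtree p w).erase w, edgeWeight S lf lb (p x) x := by
  rw [qCost_eq _ _ _ _ _ _ (subtree p w) (fun t => Finset.inter_subset_right),
    sum_subtreeEdges r p depth hpr hdepth]
  congr 1
  · refine Finset.sum_congr rfl fun x hx => ?_
    simp [nodeWeight, hx]
  · refine Finset.sum_congr rfl fun x hx => ?_
    obtain ⟨hne, hx⟩ := Finset.mem_erase.1 hx
    simp [edgeWeight, hx, (parent_mem_subtree r p hpr hx hne).2]

end Tree

/-- Decomposition of the cost over an arborescence: if `𝒮` is an ordered `k`-partition of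
the vertices of the subtree `G_v` with `v ∈ S_i`, then
`q(𝒮, M) = ‖a(v) − μ_i‖² + ∑_{w child of v} (g(w) + q(𝒮_w, M))`, where `𝒮_w` is the
restriction of `𝒮` to `G_w` and `g(w)` is `0`, `λ_f`, or `λ_b` according to whether `w`
lies in `S_i`, in a later group, or in an earlier group. -/
theorem qCost_tree_decomposition {V : Type*} [Fintype V] [DecidableEq V] {D k : ℕ}
    (r : V) (p : V → V) (depth : V → ℕ)
    (hpr : p r = r) (hdepth : ∀ w, w ≠ r → depth w = depth (p w) + 1)
    (a : V → EuclideanSpace ℝ (Fin D)) (μ : Fin k → EuclideanSpace ℝ (Fin D))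
    (lf lb : ℝ) (hlf : 0 ≤ lf) (hlb : 0 ≤ lb)
    (v : V) (i : Fin k) (S : Fin k → Finset V)
    (hv : v ∈ S i)
    (hcover : ∀ w, w ∈ subtree p v ↔ ∃ t, w ∈ S t)
    (hdisj : ∀ s t, s ≠ t → Disjoint (S s) (S t)) :
    qCost (subtreeEdges r p v) a S μ lf lb
      = ‖a v - μ i‖ ^ 2
        + ∑ w ∈ children r p v,
            ((∑ m : Fin k, if w ∈ S m then
                (if i < m then lf else if m < i then lb else 0) else 0)
              + qCost (subtreeEdges r p w) a (fun t => S t ∩ subtree p w) μ lf lb) := by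
  have huniq : ∀ {x : V} {s : Fin k}, x ∈ S s → ∀ t, x ∈ S t ↔ t = s := by
    intro x s hs t
    refine ⟨fun ht => ?_, fun h => h ▸ hs⟩
    by_contra hne
    exact Finset.disjoint_left.1 (hdisj t s hne) ht hs
  have hS : S = fun t => S t ∩ subtree p v := by
    funext t
    exact (Finset.inter_eq_left.2 fun x hx => (hcover x).2 ⟨t, hx⟩).symm
  have hL : qCost (subtreeEdges r p v) a S μ lf lb =
      qCost (subtreeEdges r p v) a (fun t => S t ∩ subtree p v) μ lf lb := by
    rw [← hS]
  have hnode : nodeWeight a S μ v = ‖a v - μ i‖ ^ 2 := by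
    simp [nodeWeight, huniq hv]
  rw [hL, qCost_subtree r p depth hpr hdepth, ← Finset.add_sum_erase _ _ (self_mem_subtree p v),
    hnode, add_assoc, ← Finset.sum_add_distrib, erase_subtree r p depth hpr hdepth,
    Finset.sum_biUnion (disjoint_subtree r p depth hpr hdepth v)]
  congr 1
  refine Finset.sum_congr rfl fun w hw => ?_
  have hwv : p w = v := (Finset.mem_filter.1 hw).2.2
  obtain ⟨m, hm⟩ := (hcover w).1 ((mem_subtree p).2 ⟨1, hwv⟩)
  have hg : (∑ m : Fin k, if w ∈ S m then
      (if i < m then lf else if m < i then lb else 0) else 0) = edgeWeight S lf lb (p w) w := by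
    rw [hwv, edgeWeight_eq S lf lb v w i m (huniq hv) (huniq hm)]
    simp [huniq hm]
  rw [hg, qCost_subtree r p depth hpr hdepth, Finset.sum_add_distrib,
    ← Finset.add_sum_erase _ (fun x => edgeWeight S lf lb (p x) x) (self_mem_subtree p w)]
  ring
end

section
/- Let G = (V, E) be a finite undirected graph with k distinct terminals t₁, …, t_k ∈ V. Construct a directed graph G′ as follows: its vertex set is V ∪ U₁ ∪ ⋯ ∪ U_k, where U₁, …, U_k are pairwise disjoint sets of new vertices with |U_i| = |V| for each i; each undirected edge of E is replaced by a directed edge in an arbitrary fixed direction; and for each i and each u ∈ U_i there is a directed edge between u and t_i. Set λ_f = λ_b = 1, let μ₁, …, μ_k ∈ ℝ^k be the standard unit vectors (μ_i has 1 in coordinate i and 0 elsewhere), and define features a(t_i) = μ_i, a(u) = μ_i for u ∈ U_i, and a(v) = 0 for v ∈ V \ {t₁, …, t_k}. Then every ordered k-partition 𝒮 = (S₁, …, S_k) of the vertices of G′ minimizing q(𝒮, {μ_i} | 1, 1) satisfies U_i ∪ {t_i} ⊆ S_i for every i ∈ {1, …, k}. -/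
/-!
A partition is the same thing as a labelling `f` of the vertices, and with `λ_f = λ_b = 1` its cost
is the feature cost plus the number of edges whose endpoints have different labels
(`qCost_eq_labelCost`). On the constructed graph this splits into a part on `V`, a part on the
oriented edges of `G`, and a part on the pendant vertices `U_1 ∪ ⋯ ∪ U_k` (`labelCost_eq`).

Fix `i` and relabel all of `U_i ∪ {t_i}` by `i`. If `t_i` already has label `i`, only the pendant
part changes, and it drops strictly as soon as some `u ∈ U_i` is mislabelled. If `t_i` has another
label, each `u ∈ U_i` costs at least `1` before (either its edge is cut, or it shares the wrong
label of `t_i` and pays `2` in features) and `0` after, which gains `|V|`; the feature cost of `t_i`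
drops by `2`; and at most `|V|` edges of `G` at `t_i` become cut (`card_incident_le`). So the cost
again drops strictly, contradicting optimality.
-/

open Finset

/-- The cost of a labelling `f`: total feature cost plus the number of edges cut by `f`. -/
noncomputable def labelCost {X : Type*} [Fintype X] {D k : ℕ}
    (E : Finset (X × X)) (a : X → EuclideanSpace ℝ (Fin D))
    (f : X → Fin k) (μ : Fin k → EuclideanSpace ℝ (Fin D)) : ℝ :=
  (∑ x, ‖a x - μ (f x)‖ ^ 2) + ∑ e ∈ E, if f e.1 = f e.2 then (0 : ℝ) else 1

/-- An edge between labels `p` and `q` is counted by exactly one ordered pair `i < j`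
if `p ≠ q`, and by none otherwise. -/
lemma sum_pairs_eq {k : ℕ} (p q : Fin k) :
    (∑ i : Fin k, ∑ j : Fin k, if i < j then
      ((if p = i ∧ q = j then (1 : ℝ) else 0) + (if p = j ∧ q = i then (1 : ℝ) else 0)) else 0)
      = if p = q then 0 else 1 := by
  have h : ∀ i j : Fin k, (if i < j then
      ((if p = i ∧ q = j then (1 : ℝ) else 0) + (if p = j ∧ q = i then (1 : ℝ) else 0)) else 0)
      = (if p = i then (if q = j then (if p < q then (1 : ℝ) else 0) else 0) else 0)
        + (if q = i then (if p = j then (if q < p then (1 : ℝ) else 0) else 0) else 0) := by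
    intro i j
    split_ifs <;> first | (exfalso; omega) | norm_num
  simp_rw [h, Finset.sum_add_distrib]
  simp only [Finset.sum_ite_irrel, Finset.sum_const_zero, Finset.sum_ite_eq, Finset.mem_univ,
    if_true]
  split_ifs <;> first | (exfalso; omega) | norm_num

lemma qCost_eq_labelCost {X : Type*} [Fintype X] [DecidableEq X] {D k : ℕ}
    (E : Finset (X × X)) (a : X → EuclideanSpace ℝ (Fin D))
    (S : Fin k → Finset X) (μ : Fin k → EuclideanSpace ℝ (Fin D)) (f : X → Fin k)
    (hf : ∀ i x, x ∈ S i ↔ f x = i) :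
    qCost E a S μ 1 1 = labelCost E a f μ := by
  have hS : ∀ i, S i = Finset.univ.filter (fun x => f x = i) := by
    intro i; ext x; simp [hf]
  unfold qCost labelCost
  congr 1
  · rw [← Finset.sum_fiberwise Finset.univ f (fun x => ‖a x - μ (f x)‖ ^ 2)]
    refine Finset.sum_congr rfl fun i _ => ?_
    rw [hS]
    refine Finset.sum_congr rfl fun x hx => ?_
    rw [(Finset.mem_filter.1 hx).2]
  · simp_rw [← sum_pairs_eq]
    rw [Finset.sum_comm (s := E)]
    refine Finset.sum_congr rfl fun i _ => ?_
    rw [Finset.sum_comm (s := E)]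
    refine Finset.sum_congr rfl fun j _ => ?_
    by_cases hij : i < j
    · simp [hij, hf, Finset.sum_add_distrib, Finset.sum_boole]
    · simp [hij]

lemma norm_single_sub_sq {k : ℕ} (i j : Fin k) :
    ‖(EuclideanSpace.single i (1 : ℝ) : EuclideanSpace ℝ (Fin k)) - EuclideanSpace.single j 1‖ ^ 2
      = if j = i then 0 else 2 := by
  split_ifs with h
  · subst h; simp
  · rw [norm_sub_sq_real]
    have : i ≠ j := fun h' => h h'.symm
    simp [EuclideanSpace.inner_single_left, this]
    norm_num

/-- In an orientation of a simple graph at most `|V|` edges touch a given vertex, since an edge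
is determined by its other endpoint. -/
lemma card_incident_le {V : Type*} [Fintype V] [DecidableEq V] (orient : Finset (V × V))
    (hone : ∀ v w : V, ¬((v, w) ∈ orient ∧ (w, v) ∈ orient)) (s : V) :
    (orient.filter (fun e => e.1 = s ∨ e.2 = s)).card ≤ Fintype.card V := by
  rw [← Finset.card_univ]
  refine Finset.card_le_card_of_injOn (fun e => if e.1 = s then e.2 else e.1)
    (fun _ _ => Finset.mem_coe.2 (Finset.mem_univ _)) ?_
  rintro ⟨a, b⟩ h1 ⟨c, d⟩ h2 h
  simp only [Finset.coe_filter, Set.mem_ofPred_eq] at h1 h2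
  have := hone a b
  have := hone c d
  dsimp only at h
  grind

/-- The cost on the constructed graph: features on `V`, cut edges of `G`, and for each pendant vertex
`(j, m)` its feature cost plus the cost of its edge to `t j`, whose direction does not matter. -/
lemma labelCost_eq {V : Type*} [Fintype V] [DecidableEq V] {k n : ℕ} (t : Fin k → V)
    (orient : Finset (V × V)) (dir : Fin k × Fin n → Bool)
    (a : (V ⊕ (Fin k × Fin n)) → EuclideanSpace ℝ (Fin k))
    (haU : ∀ u : Fin k × Fin n, a (Sum.inr u) = EuclideanSpace.single u.1 1)
    (μ : Fin k → EuclideanSpace ℝ (Fin k))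
    (hμ : ∀ i, μ i = EuclideanSpace.single i 1)
    (f : V ⊕ (Fin k × Fin n) → Fin k) :
    labelCost (orient.image (fun e => (Sum.inl e.1, Sum.inl e.2)) ∪
        Finset.univ.image (fun u : Fin k × Fin n =>
          if dir u then (Sum.inl (t u.1), Sum.inr u) else (Sum.inr u, Sum.inl (t u.1)))) a f μ
      = (∑ v, ‖a (Sum.inl v) - μ (f (Sum.inl v))‖ ^ 2)
        + (∑ e ∈ orient, if f (Sum.inl e.1) = f (Sum.inl e.2) then (0 : ℝ) else 1)
        + ∑ j, ∑ m, ((if f (Sum.inr (j, m)) = j then (0 : ℝ) else 2)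
          + if f (Sum.inr (j, m)) = f (Sum.inl (t j)) then (0 : ℝ) else 1) := by
  unfold labelCost
  rw [Fintype.sum_sum_type, Finset.sum_union, Finset.sum_image, Finset.sum_image,
    ← Fintype.sum_prod_type', Finset.sum_add_distrib]
  · have h1 : ∀ u : Fin k × Fin n, ‖a (Sum.inr u) - μ (f (Sum.inr u))‖ ^ 2
        = if f (Sum.inr u) = u.1 then (0 : ℝ) else 2 := by
      intro u; rw [haU, hμ, norm_single_sub_sq]
    have h2 : ∀ u : Fin k × Fin n,
        (if f (if dir u then ((Sum.inl (t u.1), Sum.inr u) :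
            (V ⊕ (Fin k × Fin n)) × (V ⊕ (Fin k × Fin n))) else (Sum.inr u, Sum.inl (t u.1))).1
          = f (if dir u then ((Sum.inl (t u.1), Sum.inr u) :
            (V ⊕ (Fin k × Fin n)) × (V ⊕ (Fin k × Fin n))) else (Sum.inr u, Sum.inl (t u.1))).2
          then (0 : ℝ) else 1) = if f (Sum.inr u) = f (Sum.inl (t u.1)) then (0 : ℝ) else 1 := by
      intro u
      cases dir u <;> simp [eq_comm]
    simp_rw [h1, h2]
    ring
  · intro u _ w _ h
    dsimp only at h
    split_ifs at h <;> simp_all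
  · rintro ⟨p, q⟩ _ ⟨r, s⟩ _ h
    simpa using h
  · rw [Finset.disjoint_left]
    intro e he he'
    obtain ⟨x, -, rfl⟩ := Finset.mem_image.1 he
    obtain ⟨u, -, hu⟩ := Finset.mem_image.1 he'
    split_ifs at hu <;> simp at hu

/-- In the reduction from unweighted minimum multiterminal cut, every ordered `k`-partition
minimizing `q(·, {μ_i} | 1, 1)` on the constructed graph `G′` puts `U_i ∪ {t_i}` inside
`S_i` for every `i`.  Here the vertices of `G′` are `V ⊕ (Fin k × Fin |V|)`, where
`U_i = {i} × Fin |V|`; `orient` is an arbitrary fixed orientation of the undirected edges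
of `G`; each `u ∈ U_i` is joined to `t_i` by a directed edge (in an arbitrary direction
given by `dir`); the features are `a(t_i) = μ_i`, `a(u) = μ_i` for `u ∈ U_i`, and `0`
otherwise, where `μ_i` is the `i`-th standard unit vector of `ℝ^k`. -/
theorem optimal_partition_contains_terminals
    {V : Type*} [Fintype V] [DecidableEq V] {k : ℕ}
    (G : SimpleGraph V) [DecidableRel G.Adj]
    (t : Fin k → V) (htinj : Function.Injective t)
    (orient : Finset (V × V))
    (horient : ∀ v w : V, G.Adj v w ↔ ((v, w) ∈ orient ∨ (w, v) ∈ orient))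
    (hone : ∀ v w : V, ¬((v, w) ∈ orient ∧ (w, v) ∈ orient))
    (dir : Fin k × Fin (Fintype.card V) → Bool)
    (E' : Finset ((V ⊕ (Fin k × Fin (Fintype.card V))) × (V ⊕ (Fin k × Fin (Fintype.card V)))))
    (hE' : E' = orient.image (fun e => (Sum.inl e.1, Sum.inl e.2)) ∪
        Finset.univ.image (fun u : Fin k × Fin (Fintype.card V) =>
          if dir u then (Sum.inl (t u.1), Sum.inr u) else (Sum.inr u, Sum.inl (t u.1))))
    (a : (V ⊕ (Fin k × Fin (Fintype.card V))) → EuclideanSpace ℝ (Fin k))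
    (hat : ∀ i : Fin k, a (Sum.inl (t i)) = EuclideanSpace.single i 1)
    (hanon : ∀ v : V, (∀ i : Fin k, v ≠ t i) → a (Sum.inl v) = 0)
    (haU : ∀ u : Fin k × Fin (Fintype.card V), a (Sum.inr u) = EuclideanSpace.single u.1 1)
    (μ : Fin k → EuclideanSpace ℝ (Fin k))
    (hμ : ∀ i, μ i = EuclideanSpace.single i 1)
    (S : Fin k → Finset (V ⊕ (Fin k × Fin (Fintype.card V))))
    (hdisj : ∀ i j, i ≠ j → Disjoint (S i) (S j))
    (hcover : ∀ x, ∃ i, x ∈ S i)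
    (hopt : ∀ S' : Fin k → Finset (V ⊕ (Fin k × Fin (Fintype.card V))),
        (∀ i j, i ≠ j → Disjoint (S' i) (S' j)) → (∀ x, ∃ i, x ∈ S' i) →
        qCost E' a S μ 1 1 ≤ qCost E' a S' μ 1 1) :
    ∀ i : Fin k, Sum.inl (t i) ∈ S i ∧
      ∀ u : Fin (Fintype.card V), Sum.inr (i, u) ∈ S i := by
  classical
  choose f hf using hcover
  have hfS : ∀ i x, x ∈ S i ↔ f x = i := by
    intro i x
    refine ⟨fun h => ?_, fun h => h ▸ hf x⟩
    by_contra hne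
    exact Finset.disjoint_left.1 (hdisj _ _ hne) (hf x) h
  have hmin : ∀ g : V ⊕ (Fin k × Fin (Fintype.card V)) → Fin k,
      labelCost E' a f μ ≤ labelCost E' a g μ := by
    intro g
    have hg : ∀ i x, x ∈ (fun i => Finset.univ.filter (fun x => g x = i)) i ↔ g x = i := by simp
    rw [← qCost_eq_labelCost E' a S μ f hfS, ← qCost_eq_labelCost E' a _ μ g hg]
    apply hopt
    · intro i j hij
      rw [Finset.disjoint_left]
      intro x hx hx'
      exact hij (((hg i x).1 hx).symm.trans ((hg j x).1 hx'))
    · intro x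
      exact ⟨g x, (hg _ x).2 rfl⟩
  intro i
  simp only [hfS]
  -- The competitor: relabel `U_i ∪ {t_i}` by `i`.
  obtain ⟨g, hgl, hgr⟩ : ∃ g : V ⊕ (Fin k × Fin (Fintype.card V)) → Fin k,
      (∀ v, g (Sum.inl v) = if v = t i then i else f (Sum.inl v)) ∧
      (∀ u, g (Sum.inr u) = if u.1 = i then i else f (Sum.inr u)) :=
    ⟨Sum.elim (fun v => if v = t i then i else f (Sum.inl v))
      (fun u => if u.1 = i then i else f (Sum.inr u)), fun _ => rfl, fun _ => rfl⟩
  have hle := hmin g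
  rw [hE', labelCost_eq t orient dir a haU μ hμ, labelCost_eq t orient dir a haU μ hμ] at hle
  -- The pendant part only changes in the summand `j = i`, which becomes `0`.
  have hpend : (∑ j, ∑ m, ((if g (Sum.inr (j, m)) = j then (0 : ℝ) else 2)
          + if g (Sum.inr (j, m)) = g (Sum.inl (t j)) then (0 : ℝ) else 1))
      + (∑ m, ((if f (Sum.inr (i, m)) = i then (0 : ℝ) else 2)
          + if f (Sum.inr (i, m)) = f (Sum.inl (t i)) then (0 : ℝ) else 1))
      = ∑ j, ∑ m, ((if f (Sum.inr (j, m)) = j then (0 : ℝ) else 2)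
          + if f (Sum.inr (j, m)) = f (Sum.inl (t j)) then (0 : ℝ) else 1) := by
    rw [← Finset.add_sum_erase _ _ (Finset.mem_univ i),
      ← Finset.add_sum_erase (a := i) (f := fun j => ∑ m,
          ((if f (Sum.inr (j, m)) = j then (0 : ℝ) else 2)
          + if f (Sum.inr (j, m)) = f (Sum.inl (t j)) then (0 : ℝ) else 1)) _
          (Finset.mem_univ i)]
    have h0 : (∑ m, ((if g (Sum.inr (i, m)) = i then (0 : ℝ) else 2)
          + if g (Sum.inr (i, m)) = g (Sum.inl (t i)) then (0 : ℝ) else 1)) = 0 := by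
      simp [hgr, hgl]
    have h1 : (∑ j ∈ Finset.univ.erase i, ∑ m, ((if g (Sum.inr (j, m)) = j then (0 : ℝ) else 2)
          + if g (Sum.inr (j, m)) = g (Sum.inl (t j)) then (0 : ℝ) else 1))
        = ∑ j ∈ Finset.univ.erase i, ∑ m, ((if f (Sum.inr (j, m)) = j then (0 : ℝ) else 2)
          + if f (Sum.inr (j, m)) = f (Sum.inl (t j)) then (0 : ℝ) else 1) := by
      refine Finset.sum_congr rfl fun j hj => ?_
      have hji := Finset.ne_of_mem_erase hj
      have htj : t j ≠ t i := fun h => hji (htinj h)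
      simp [hgr, hgl, hji, htj]
    rw [h0, h1]
    ring
  by_cases hti : f (Sum.inl (t i)) = i
  · refine ⟨hti, fun u => ?_⟩
    by_contra hu
    have hgf : ∀ v, g (Sum.inl v) = f (Sum.inl v) := by
      intro v
      by_cases hv : v = t i
      · subst hv; rw [hgl, if_pos rfl, hti]
      · rw [hgl, if_neg hv]
    have hpos : (0 : ℝ) < ∑ m, ((if f (Sum.inr (i, m)) = i then (0 : ℝ) else 2)
          + if f (Sum.inr (i, m)) = f (Sum.inl (t i)) then (0 : ℝ) else 1) := by
      refine Finset.sum_pos' (fun m _ => ?_) ⟨u, Finset.mem_univ _, ?_⟩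
      · split_ifs <;> norm_num
      · rw [if_neg hu]
        split_ifs <;> norm_num
    have hV : ∑ v, ‖a (Sum.inl v) - μ (g (Sum.inl v))‖ ^ 2
        = ∑ v, ‖a (Sum.inl v) - μ (f (Sum.inl v))‖ ^ 2 :=
      Finset.sum_congr rfl fun v _ => by rw [hgf]
    have hE : (∑ e ∈ orient, if g (Sum.inl e.1) = g (Sum.inl e.2) then (0 : ℝ) else 1)
        = ∑ e ∈ orient, if f (Sum.inl e.1) = f (Sum.inl e.2) then (0 : ℝ) else 1 :=
      Finset.sum_congr rfl fun e _ => by rw [hgf, hgf]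
    linarith
  · exfalso
    have hU : (Fintype.card V : ℝ) ≤ ∑ m, ((if f (Sum.inr (i, m)) = i then (0 : ℝ) else 2)
          + if f (Sum.inr (i, m)) = f (Sum.inl (t i)) then (0 : ℝ) else 1) := by
      have : (Fintype.card V : ℝ) = ∑ _m : Fin (Fintype.card V), (1 : ℝ) := by simp
      rw [this]
      refine Finset.sum_le_sum fun m _ => ?_
      split_ifs with h1 h2
      · exact absurd (h2.symm.trans h1) hti
      all_goals norm_num
    have hV : (∑ v, ‖a (Sum.inl v) - μ (g (Sum.inl v))‖ ^ 2) + 2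
        = ∑ v, ‖a (Sum.inl v) - μ (f (Sum.inl v))‖ ^ 2 := by
      rw [← Finset.add_sum_erase _ _ (Finset.mem_univ (t i)),
        ← Finset.add_sum_erase (a := t i)
          (f := fun v => ‖a (Sum.inl v) - μ (f (Sum.inl v))‖ ^ 2) _ (Finset.mem_univ (t i))]
      have h1 : ∑ v ∈ Finset.univ.erase (t i), ‖a (Sum.inl v) - μ (g (Sum.inl v))‖ ^ 2
          = ∑ v ∈ Finset.univ.erase (t i), ‖a (Sum.inl v) - μ (f (Sum.inl v))‖ ^ 2 := by
        refine Finset.sum_congr rfl fun v hv => ?_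
        simp [hgl, Finset.ne_of_mem_erase hv]
      rw [h1, hat, hμ, hμ, norm_single_sub_sq, norm_single_sub_sq, if_pos (by simp [hgl]),
        if_neg hti]
      ring
    have hE : (∑ e ∈ orient, if g (Sum.inl e.1) = g (Sum.inl e.2) then (0 : ℝ) else 1)
        ≤ (∑ e ∈ orient, if f (Sum.inl e.1) = f (Sum.inl e.2) then (0 : ℝ) else 1)
          + Fintype.card V := by
      have hc : ((orient.filter (fun e => e.1 = t i ∨ e.2 = t i)).card : ℝ)
          ≤ Fintype.card V := by
        exact_mod_cast card_incident_le orient hone (t i)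
      refine le_trans ?_ (add_le_add_right hc _)
      rw [← Finset.sum_boole, ← Finset.sum_add_distrib]
      refine Finset.sum_le_sum fun e _ => ?_
      by_cases he : e.1 = t i ∨ e.2 = t i
      · rw [if_pos he]
        split_ifs <;> norm_num
      · have h1 : e.1 ≠ t i := fun h => he (Or.inl h)
        have h2 : e.2 ≠ t i := fun h => he (Or.inr h)
        simp [hgl, h1, h2]
    linarith
end
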